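/- Jensen–Shannon divergence bound (Lemma JSBound): under the conditional-density setup, let P and Q be probability measures on 𝒲 and ξ ≥ 0, and suppose that for every d ∈ 𝒟 the map w ↦ f(d, w) is bounded with 0 < inf_{w∈𝒲} f(d, w) and sup_{w∈𝒲} f(d, w) ≤ e^{2ξ} · inf_{w∈𝒲} f(d, w). Then JS(G_Q ‖ G_P) ≤ (1/4)·(e^{2ξ} − 1)²·TV(P, Q)². -/

import Mathlib

open MeasureTheory
open scoped ENNReal

/-- Total variation distance between two measures: the supremum over measurable sets `A`
of `|P(A) − Q(A)|`. -/
noncomputable def tvDist {Ω : Type*} [MeasurableSpace Ω] (P Q : Measure Ω) : ℝ :=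
  ⨆ A : {s : Set Ω // MeasurableSet s}, |(P A.1).toReal - (Q A.1).toReal|

/-- Kullback–Leibler divergence `KL(μ₁ ‖ μ₂) = ∫ log(dμ₁/dμ₂) dμ₁`. -/
noncomputable def klDiv {Ω : Type*} [MeasurableSpace Ω] (μ₁ μ₂ : Measure Ω) : ℝ :=
  ∫ x, llr μ₁ μ₂ x ∂μ₁

/-- Jensen–Shannon divergence `JS(μ₁ ‖ μ₂) = (1/2) KL(μ₁ ‖ m) + (1/2) KL(μ₂ ‖ m)` with
`m = (μ₁ + μ₂)/2`. -/
noncomputable def jsDiv {Ω : Type*} [MeasurableSpace Ω] (μ₁ μ₂ : Measure Ω) : ℝ :=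
  (1 / 2) * klDiv μ₁ ((2 : ℝ≥0∞)⁻¹ • (μ₁ + μ₂)) + (1 / 2) * klDiv μ₂ ((2 : ℝ≥0∞)⁻¹ • (μ₁ + μ₂))

/-! The Kullback–Leibler divergence is at most the `χ²`-divergence, because
`x log x + 1 - x ≤ (x - 1) ^ 2`. Against the midpoint of two densities `p` and `q` this gives
`JS(p ‖ q) ≤ (1/2) ∫ (p - q) ^ 2 / (p + q)`. If the values of a conditional density at a point `d`
lie in `[a, C a]`, then the two mixtures at `d` differ by at most `(C - 1) a TV(P, Q)` by the layer
cake formula, while each of them is at least `a`. So the integrand is at most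
`((C - 1) TV(P, Q)) ^ 2 / 4` times `p + q`, whose integral is `2`. -/

section TotalVariation

variable {Ω : Type*} [MeasurableSpace Ω]

lemma tvDist_comm (P Q : Measure Ω) : tvDist P Q = tvDist Q P := by
  simp only [tvDist, abs_sub_comm]

variable (P Q : Measure Ω)

lemma abs_measureReal_sub_le_tvDist [IsFiniteMeasure P] [IsFiniteMeasure Q] {s : Set Ω}
    (hs : MeasurableSet s) : |P.real s - Q.real s| ≤ tvDist P Q := by
  refine le_ciSup (f := fun A : {s : Set Ω // MeasurableSet s} => |P.real A.1 - Q.real A.1|)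
    ⟨P.real .univ + Q.real .univ, ?_⟩ ⟨s, hs⟩
  rintro _ ⟨A, rfl⟩
  calc |P.real A.1 - Q.real A.1|
      ≤ P.real A.1 + Q.real A.1 := by
        simpa only [abs_of_nonneg measureReal_nonneg] using abs_sub (P.real A.1) (Q.real A.1)
    _ ≤ P.real .univ + Q.real .univ :=
        add_le_add (measureReal_mono (Set.subset_univ _)) (measureReal_mono (Set.subset_univ _))

lemma integrableOn_Ioc_measureReal_le [IsFiniteMeasure P] (h : Ω → ℝ) (b c : ℝ) :
    IntegrableOn (fun t => P.real {x | t ≤ h x}) (Set.Ioc b c) := by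
  have h_anti : Antitone fun t => P.real {x | t ≤ h x} := fun s t hst =>
    measureReal_mono fun x (hx : t ≤ h x) => hst.trans hx
  exact ((h_anti.antitoneOn _).integrableOn_isCompact isCompact_Icc).mono_set
    Set.Ioc_subset_Icc_self

lemma abs_integral_sub_integral_le_mul_tvDist [IsFiniteMeasure P] [IsFiniteMeasure Q] {h : Ω → ℝ}
    (hh : Measurable h) {b : ℝ} (hb : 0 ≤ b) (hmem : ∀ x, h x ∈ Set.Icc 0 b) :
    |∫ x, h x ∂P - ∫ x, h x ∂Q| ≤ b * tvDist P Q := by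
  have layer_cake (ν : Measure Ω) [IsFiniteMeasure ν] :
      ∫ x, h x ∂ν = ∫ t in Set.Ioc 0 b, ν.real {x | t ≤ h x} :=
    (Integrable.of_mem_Icc 0 b hh.aemeasurable (.of_forall hmem)).integral_eq_integral_Ioc_meas_le
      (.of_forall fun x => (hmem x).1) (.of_forall fun x => (hmem x).2)
  rw [layer_cake P, layer_cake Q, ← integral_sub (integrableOn_Ioc_measureReal_le P h 0 b)
    (integrableOn_Ioc_measureReal_le Q h 0 b)]
  simpa [hb, mul_comm] using norm_setIntegral_le_of_norm_le_const (μ := volume)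
    (s := Set.Ioc 0 b) (f := fun t => P.real {x | t ≤ h x} - Q.real {x | t ≤ h x})
    measure_Ioc_lt_top
    fun t _ => abs_measureReal_sub_le_tvDist P Q (measurableSet_le measurable_const hh)

lemma abs_integral_sub_integral_le_sub_mul_tvDist [IsFiniteMeasure P] [IsFiniteMeasure Q]
    (hPQ : P.real .univ = Q.real .univ) {h : Ω → ℝ} (hh : Measurable h) {a b : ℝ} (hab : a ≤ b)
    (hmem : ∀ x, h x ∈ Set.Icc a b) :
    |∫ x, h x ∂P - ∫ x, h x ∂Q| ≤ (b - a) * tvDist P Q := by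
  have integral_shift (ν : Measure Ω) [IsFiniteMeasure ν] :
      ∫ x, (h x - a) ∂ν = ∫ x, h x ∂ν - ν.real .univ * a := by
    rw [integral_sub (.of_mem_Icc a b hh.aemeasurable (.of_forall hmem)) (integrable_const a),
      integral_const, smul_eq_mul]
  have h_shift := abs_integral_sub_integral_le_mul_tvDist P Q (hh.sub_const a)
    (sub_nonneg.2 hab) fun x => ⟨sub_nonneg.2 (hmem x).1, sub_le_sub_right (hmem x).2 a⟩
  rwa [integral_shift P, integral_shift Q, hPQ, sub_sub_sub_cancel_right] at h_shift

lemma mem_Icc_iInf_mul_iInf {ι : Type*} [Nonempty ι] {g : ι → ℝ} (hg₀ : ∀ i, 0 ≤ g i) {C : ℝ}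
    (hC : ∀ i j, g i ≤ C * g j) (i : ι) : g i ∈ Set.Icc (⨅ j, g j) (C * ⨅ j, g j) := by
  have hinf : ⨅ j, g j ≤ g i := ciInf_le ⟨0, Set.forall_mem_range.2 hg₀⟩ i
  refine ⟨hinf, ?_⟩
  rcases le_total 0 C with hC₀ | hC₀
  · exact Real.mul_iInf_of_nonneg hC₀ g ▸ le_ciInf (hC i)
  · exact (hC i i).trans (mul_le_mul_of_nonpos_left hinf hC₀)

lemma sq_integral_sub_div_integral_add_le [IsProbabilityMeasure P] [IsProbabilityMeasure Q]
    {h : Ω → ℝ} (hh : Measurable h) (hh₀ : ∀ x, 0 ≤ h x) {C : ℝ} (hC : ∀ x y, h x ≤ C * h y) :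
    (∫ x, h x ∂P - ∫ x, h x ∂Q) ^ 2 / (∫ x, h x ∂P + ∫ x, h x ∂Q) ≤
      ((C - 1) * tvDist P Q) ^ 2 / 4 * (∫ x, h x ∂P + ∫ x, h x ∂Q) := by
  have : Nonempty Ω := P.nonempty_of_neZero
  have hinf₀ : 0 ≤ ⨅ x, h x := Real.iInf_nonneg hh₀
  have hmem := mem_Icc_iInf_mul_iInf hh₀ hC
  have hinf_le (ν : Measure Ω) [IsProbabilityMeasure ν] : ⨅ x, h x ≤ ∫ x, h x ∂ν := by
    simpa using integral_mono (μ := ν) (integrable_const _)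
      (.of_mem_Icc _ _ hh.aemeasurable (.of_forall hmem)) fun x => (hmem x).1
  have h_sub : |∫ x, h x ∂P - ∫ x, h x ∂Q| ≤ (C * (⨅ x, h x) - ⨅ x, h x) * tvDist P Q :=
    abs_integral_sub_integral_le_sub_mul_tvDist P Q (by simp) hh
      (Set.nonempty_Icc.1 ⟨_, hmem (Classical.arbitrary Ω)⟩) hmem
  have h_add : 2 * ⨅ x, h x ≤ ∫ x, h x ∂P + ∫ x, h x ∂Q := by linarith [hinf_le P, hinf_le Q]
  have h_add₀ : 0 ≤ ∫ x, h x ∂P + ∫ x, h x ∂Q := by linarith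
  refine div_le_of_le_mul₀ h_add₀ (by positivity) ?_
  calc (∫ x, h x ∂P - ∫ x, h x ∂Q) ^ 2
      = |∫ x, h x ∂P - ∫ x, h x ∂Q| ^ 2 := (sq_abs _).symm
    _ ≤ ((C * (⨅ x, h x) - ⨅ x, h x) * tvDist P Q) ^ 2 := by gcongr
    _ = ((C - 1) * tvDist P Q) ^ 2 / 4 * (2 * ⨅ x, h x) ^ 2 := by ring
    _ ≤ ((C - 1) * tvDist P Q) ^ 2 / 4 * (∫ x, h x ∂P + ∫ x, h x ∂Q) ^ 2 := by gcongr
    _ = _ := by ring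

end TotalVariation

section Divergence

open InformationTheory (klFun klFun_apply klFun_nonneg)

lemma klFun_le_sub_one_sq {x : ℝ} (hx : 0 ≤ x) : klFun x ≤ (x - 1) ^ 2 := by
  rw [klFun_apply]
  rcases hx.eq_or_lt with rfl | hx_pos
  · simp
  · calc x * Real.log x + 1 - x ≤ x * (x - 1) + 1 - x := by
          gcongr
          exact Real.log_le_sub_one_of_pos hx_pos
      _ = (x - 1) ^ 2 := by ring

variable {D : Type*} [MeasurableSpace D]

lemma klDiv_le_integral_rnDeriv_sub_one_sq {G M : Measure D} [IsFiniteMeasure G]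
    [IsFiniteMeasure M] (hGM : G ≪ M) (h_univ : G .univ = M .univ)
    (h_int : Integrable (fun d => ((G.rnDeriv M d).toReal - 1) ^ 2) M) :
    klDiv G M ≤ ∫ d, ((G.rnDeriv M d).toReal - 1) ^ 2 ∂M := by
  calc klDiv G M = (InformationTheory.klDiv G M).toReal :=
        (InformationTheory.toReal_klDiv_of_measure_eq hGM h_univ).symm
    _ = ∫ d, klFun (G.rnDeriv M d).toReal ∂M :=
        InformationTheory.toReal_klDiv_eq_integral_klFun hGM
    _ ≤ ∫ d, ((G.rnDeriv M d).toReal - 1) ^ 2 ∂M :=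
        integral_mono_of_nonneg (.of_forall fun d => klFun_nonneg ENNReal.toReal_nonneg) h_int
          (.of_forall fun d => klFun_le_sub_one_sq ENNReal.toReal_nonneg)

variable {μ : Measure D} {p q m : D → ℝ}

lemma withDensity_ofReal_eq_withDensity_div (hp : AEMeasurable p μ) (hm : AEMeasurable m μ)
    (hm₀ : 0 ≤ᵐ[μ] m) (hpm : ∀ᵐ d ∂μ, m d = 0 → p d = 0) :
    μ.withDensity (fun d => ENNReal.ofReal (p d)) =
      (μ.withDensity fun d => ENNReal.ofReal (m d)).withDensity
        fun d => ENNReal.ofReal (p d / m d) := by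
  have hr : AEMeasurable (fun d => ENNReal.ofReal (p d / m d)) μ := (hp.div hm).ennreal_ofReal
  rw [← withDensity_mul₀ hm.ennreal_ofReal hr]
  refine withDensity_congr_ae ?_
  filter_upwards [hm₀, hpm] with d hm₀d hpmd
  rw [Pi.mul_apply, ← ENNReal.ofReal_mul hm₀d, mul_div_cancel_of_imp' hpmd]

lemma toReal_rnDeriv_withDensity_ofReal (hp : AEMeasurable p μ) (hp₀ : 0 ≤ᵐ[μ] p)
    (hm : Integrable m μ) (hm₀ : 0 ≤ᵐ[μ] m) (hpm : ∀ᵐ d ∂μ, m d = 0 → p d = 0) :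
    (fun d => ((μ.withDensity fun d => ENNReal.ofReal (p d)).rnDeriv
      (μ.withDensity fun d => ENNReal.ofReal (m d)) d).toReal)
      =ᵐ[μ.withDensity fun d => ENNReal.ofReal (m d)] fun d => p d / m d := by
  rw [withDensity_ofReal_eq_withDensity_div hp hm.aemeasurable hm₀ hpm]
  set M := μ.withDensity fun d => ENNReal.ofReal (m d)
  have : IsFiniteMeasure M := isFiniteMeasure_withDensity_ofReal hm.2
  have hMμ : M ≪ μ := withDensity_absolutelyContinuous _ _
  have hr : AEMeasurable (fun d => ENNReal.ofReal (p d / m d)) M :=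
    ((hp.div hm.aemeasurable).mono_ac hMμ).ennreal_ofReal
  filter_upwards [Measure.rnDeriv_withDensity₀ M hr, hMμ.ae_le hp₀, hMμ.ae_le hm₀]
    with d hd hp₀d hm₀d
  rw [hd, ENNReal.toReal_ofReal (div_nonneg hp₀d hm₀d)]

lemma withDensity_ofReal_univ (hp : Integrable p μ) (hp₀ : 0 ≤ᵐ[μ] p) :
    μ.withDensity (fun d => ENNReal.ofReal (p d)) .univ = ENNReal.ofReal (∫ d, p d ∂μ) := by
  rw [withDensity_apply _ .univ, Measure.restrict_univ, ofReal_integral_eq_lintegral_ofReal hp hp₀]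

lemma klDiv_withDensity_le_integral_sq_div (hp : Integrable p μ) (hp₀ : 0 ≤ᵐ[μ] p)
    (hm : Integrable m μ) (hm₀ : 0 ≤ᵐ[μ] m) (hpm : ∀ᵐ d ∂μ, m d = 0 → p d = 0)
    (h_eq : ∫ d, p d ∂μ = ∫ d, m d ∂μ) (h_int : Integrable (fun d => (p d - m d) ^ 2 / m d) μ) :
    klDiv (μ.withDensity fun d => ENNReal.ofReal (p d))
      (μ.withDensity fun d => ENNReal.ofReal (m d)) ≤ ∫ d, (p d - m d) ^ 2 / m d ∂μ := by
  set G := μ.withDensity fun d => ENNReal.ofReal (p d)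
  set M := μ.withDensity fun d => ENNReal.ofReal (m d) with hM
  have : IsFiniteMeasure G := isFiniteMeasure_withDensity_ofReal hp.2
  have : IsFiniteMeasure M := isFiniteMeasure_withDensity_ofReal hm.2
  have hGM : G ≪ M := by
    rw [show G = _ from
      withDensity_ofReal_eq_withDensity_div hp.aemeasurable hm.aemeasurable hm₀ hpm]
    exact withDensity_absolutelyContinuous _ _
  have h_univ : G .univ = M .univ := by
    rw [withDensity_ofReal_univ hp hp₀, withDensity_ofReal_univ hm hm₀, h_eq]
  have h_rnDeriv : (fun d => ((G.rnDeriv M d).toReal - 1) ^ 2) =ᵐ[M]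
      fun d => (p d / m d - 1) ^ 2 :=
    (toReal_rnDeriv_withDensity_ofReal hp.aemeasurable hp₀ hm hm₀ hpm).fun_comp fun x => (x - 1) ^ 2
  have h_weight : (fun d => (ENNReal.ofReal (m d)).toReal • (p d / m d - 1) ^ 2) =ᵐ[μ]
      fun d => (p d - m d) ^ 2 / m d := by
    filter_upwards [hm₀] with d hm₀d
    rw [ENNReal.toReal_ofReal hm₀d, smul_eq_mul]
    rcases eq_or_ne (m d) 0 with hmd | hmd
    · simp [hmd]
    · field_simp
  have hm_lt_top : ∀ᵐ d ∂μ, ENNReal.ofReal (m d) < ∞ := .of_forall fun _ => ENNReal.ofReal_lt_top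
  have h_chiSq : ∫ d, ((G.rnDeriv M d).toReal - 1) ^ 2 ∂M = ∫ d, (p d - m d) ^ 2 / m d ∂μ := by
    rw [integral_congr_ae h_rnDeriv, hM, integral_withDensity_eq_integral_toReal_smul₀
      hm.aemeasurable.ennreal_ofReal hm_lt_top, integral_congr_ae h_weight]
  rw [← h_chiSq]
  refine klDiv_le_integral_rnDeriv_sub_one_sq hGM h_univ ?_
  rwa [integrable_congr h_rnDeriv, hM, integrable_withDensity_iff_integrable_smul₀'
    hm.aemeasurable.ennreal_ofReal hm_lt_top, integrable_congr h_weight]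

lemma inv_two_smul_withDensity_ofReal_add (hp : AEMeasurable p μ) (hp₀ : 0 ≤ᵐ[μ] p)
    (hq₀ : 0 ≤ᵐ[μ] q) :
    (2 : ℝ≥0∞)⁻¹ • (μ.withDensity (fun d => ENNReal.ofReal (p d)) +
      μ.withDensity fun d => ENNReal.ofReal (q d)) =
    μ.withDensity fun d => ENNReal.ofReal ((p d + q d) / 2) := by
  have h_add : μ.withDensity (fun d => ENNReal.ofReal (p d) + ENNReal.ofReal (q d)) =
      μ.withDensity (fun d => ENNReal.ofReal (p d)) +
        μ.withDensity fun d => ENNReal.ofReal (q d) := Measure.ext fun s hs => by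
    simp only [withDensity_apply _ hs, Measure.add_apply,
      lintegral_add_left' hp.ennreal_ofReal.restrict]
  rw [← h_add, ← withDensity_smul' _ _ (by simp)]
  refine withDensity_congr_ae ?_
  filter_upwards [hp₀, hq₀] with d hp₀d hq₀d
  rw [Pi.smul_apply, ← ENNReal.ofReal_add hp₀d hq₀d, smul_eq_mul, div_eq_inv_mul,
    ENNReal.ofReal_mul (by positivity), ENNReal.ofReal_inv_of_pos two_pos, ENNReal.ofReal_ofNat]

lemma integrable_sq_sub_div_add (hp : Integrable p μ) (hp₀ : 0 ≤ᵐ[μ] p) (hq : Integrable q μ)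
    (hq₀ : 0 ≤ᵐ[μ] q) : Integrable (fun d => (p d - q d) ^ 2 / (p d + q d)) μ := by
  have h_meas : AEMeasurable (fun d => (p d - q d) ^ 2 / (p d + q d)) μ :=
    ((hp.aemeasurable.sub hq.aemeasurable).pow_const 2).div (hp.aemeasurable.add hq.aemeasurable)
  have h_add : Integrable (fun d => p d + q d) μ := hp.add hq
  refine h_add.mono' h_meas.aestronglyMeasurable ?_
  filter_upwards [hp₀, hq₀] with d (hp₀d : 0 ≤ p d) (hq₀d : 0 ≤ q d)
  rw [Real.norm_of_nonneg (by positivity)]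
  refine div_le_of_le_mul₀ (add_nonneg hp₀d hq₀d) (add_nonneg hp₀d hq₀d) ?_
  nlinarith [mul_nonneg hp₀d hq₀d]

lemma klDiv_withDensity_midpoint_le (hp : Integrable p μ) (hp₀ : 0 ≤ᵐ[μ] p) (hq : Integrable q μ)
    (hq₀ : 0 ≤ᵐ[μ] q) (h_eq : ∫ d, p d ∂μ = ∫ d, q d ∂μ) :
    klDiv (μ.withDensity fun d => ENNReal.ofReal (p d))
      (μ.withDensity fun d => ENNReal.ofReal ((p d + q d) / 2)) ≤
      (1 / 2) * ∫ d, (p d - q d) ^ 2 / (p d + q d) ∂μ := by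
  have h_chiSq (d : D) : (p d - (p d + q d) / 2) ^ 2 / ((p d + q d) / 2) =
      (1 / 2) * ((p d - q d) ^ 2 / (p d + q d)) := by
    rw [show p d - (p d + q d) / 2 = (p d - q d) / 2 by ring]
    rcases eq_or_ne (p d + q d) 0 with h | h
    · simp [h]
    · field_simp
  have hm₀ : 0 ≤ᵐ[μ] fun d => (p d + q d) / 2 := by
    filter_upwards [hp₀, hq₀] with d hp₀d hq₀d using div_nonneg (add_nonneg hp₀d hq₀d) zero_le_two
  have hpm : ∀ᵐ d ∂μ, (p d + q d) / 2 = 0 → p d = 0 := by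
    filter_upwards [hp₀, hq₀] with d (hp₀d : 0 ≤ p d) (hq₀d : 0 ≤ q d) hd
    linarith
  have h_mass : ∫ d, p d ∂μ = ∫ d, (p d + q d) / 2 ∂μ := by
    rw [integral_div, integral_add hp hq, ← h_eq, add_self_div_two]
  have h_le := klDiv_withDensity_le_integral_sq_div hp hp₀ ((hp.add hq).div_const 2) hm₀ hpm h_mass
  simp only [Pi.add_apply, h_chiSq, integral_const_mul] at h_le
  exact h_le ((integrable_sq_sub_div_add hp hp₀ hq hq₀).const_mul _)

lemma jsDiv_withDensity_le_integral_sq_div_add (hp : Integrable p μ) (hp₀ : 0 ≤ᵐ[μ] p)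
    (hq : Integrable q μ) (hq₀ : 0 ≤ᵐ[μ] q) (h_eq : ∫ d, p d ∂μ = ∫ d, q d ∂μ) :
    jsDiv (μ.withDensity fun d => ENNReal.ofReal (p d))
      (μ.withDensity fun d => ENNReal.ofReal (q d)) ≤
      (1 / 2) * ∫ d, (p d - q d) ^ 2 / (p d + q d) ∂μ := by
  have hpm := klDiv_withDensity_midpoint_le hp hp₀ hq hq₀ h_eq
  have hqm := klDiv_withDensity_midpoint_le hq hq₀ hp hp₀ h_eq.symm
  simp only [add_comm (q _), sub_sq_comm (q _)] at hqm
  rw [jsDiv, inv_two_smul_withDensity_ofReal_add hp.aemeasurable hp₀ hq₀]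
  linarith

end Divergence

section Mixture

variable {W D : Type*} [MeasurableSpace W] [MeasurableSpace D]

/-- The density `g_P` of the mixture of the conditional densities `f · w` when `w` is distributed
according to `P`. -/
noncomputable def marginalDensity (f : D → W → ℝ) (P : Measure W) (d : D) : ℝ :=
  ∫ w, f d w ∂P

variable {μ : Measure D} [SFinite μ] {f : D → W → ℝ}

lemma integrable_uncurry_of_integral_eq_one (hf : Measurable (Function.uncurry f))
    (hf₀ : ∀ d w, 0 ≤ f d w) (hf₁ : ∀ w, ∫ d, f d w ∂μ = 1) (P : Measure W) [IsFiniteMeasure P] :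
    Integrable (Function.uncurry f) (μ.prod P) := by
  refine (integrable_prod_iff' hf.aestronglyMeasurable).2 ⟨.of_forall fun w => ?_, ?_⟩
  · exact .of_integral_ne_zero (by simp [hf₁])
  · simp [abs_of_nonneg (hf₀ _ _), hf₁]

lemma integral_marginalDensity {P : Measure W} [SFinite P]
    (hf : Integrable (Function.uncurry f) (μ.prod P)) (hf₁ : ∀ w, ∫ d, f d w ∂μ = 1) :
    ∫ d, marginalDensity f P d ∂μ = P.real .univ := by
  simp only [marginalDensity, integral_integral_swap hf, hf₁, integral_const, smul_eq_mul, mul_one]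

end Mixture

theorem jsDiv_le_tvDist_sq_general
    {W D : Type*} [MeasurableSpace W] [MeasurableSpace D] (μ : Measure D) [SFinite μ]
    (f : D → W → ℝ) (hf : Measurable (Function.uncurry f)) (hf₀ : ∀ d w, 0 ≤ f d w)
    (hf₁ : ∀ w, ∫ d, f d w ∂μ = 1) (P Q : Measure W) [IsProbabilityMeasure P]
    [IsProbabilityMeasure Q] (C : ℝ) (hC : ∀ᵐ d ∂μ, ∀ w w', f d w ≤ C * f d w') :
    jsDiv (μ.withDensity fun d => ENNReal.ofReal (marginalDensity f Q d))
      (μ.withDensity fun d => ENNReal.ofReal (marginalDensity f P d)) ≤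
      (1 / 4) * (C - 1) ^ 2 * tvDist P Q ^ 2 := by
  set p := marginalDensity f P
  set q := marginalDensity f Q
  have hfP := integrable_uncurry_of_integral_eq_one hf hf₀ hf₁ P
  have hfQ := integrable_uncurry_of_integral_eq_one hf hf₀ hf₁ Q
  have hp : Integrable p μ := hfP.integral_prod_left
  have hq : Integrable q μ := hfQ.integral_prod_left
  have hp₁ : ∫ d, p d ∂μ = 1 := by simp [p, integral_marginalDensity hfP hf₁]
  have hq₁ : ∫ d, q d ∂μ = 1 := by simp [q, integral_marginalDensity hfQ hf₁]
  have hp₀ : 0 ≤ᵐ[μ] p := .of_forall fun d => integral_nonneg (hf₀ d)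
  have hq₀ : 0 ≤ᵐ[μ] q := .of_forall fun d => integral_nonneg (hf₀ d)
  have h_le : ∀ᵐ d ∂μ, (q d - p d) ^ 2 / (q d + p d) ≤
      ((C - 1) * tvDist Q P) ^ 2 / 4 * (q d + p d) := by
    filter_upwards [hC] with d hCd
    exact sq_integral_sub_div_integral_add_le Q P hf.of_uncurry_left (hf₀ d) hCd
  calc _ ≤ (1 / 2) * ∫ d, (q d - p d) ^ 2 / (q d + p d) ∂μ :=
        jsDiv_withDensity_le_integral_sq_div_add hq hq₀ hp hp₀ (hq₁.trans hp₁.symm)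
    _ ≤ (1 / 2) * ∫ d, ((C - 1) * tvDist Q P) ^ 2 / 4 * (q d + p d) ∂μ := by
        gcongr 1 / 2 * ?_
        exact integral_mono_ae (integrable_sq_sub_div_add hq hq₀ hp hp₀)
          ((hq.add hp).const_mul _) h_le
    _ = (1 / 4) * (C - 1) ^ 2 * tvDist P Q ^ 2 := by
        rw [integral_const_mul, integral_add hq hp, hp₁, hq₁, tvDist_comm]
        ring

/-- Jensen–Shannon divergence bound: in the conditional-density setup, if for every `d` the
conditional density `w ↦ f d w` is bounded with positive infimum and
`sup_w f d w ≤ e^{2ξ} · inf_w f d w`, then the induced marginal measures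
`G_P = g_P · μ` and `G_Q = g_Q · μ` satisfy
`JS(G_Q ‖ G_P) ≤ (1/4) (e^{2ξ} − 1)² TV(P, Q)²`. -/
theorem jsDiv_le_tvDist_sq
    {W D : Type*} [MeasurableSpace W] [MeasurableSpace D] [Nonempty W]
    (μ : Measure D) [SigmaFinite μ]
    (f : D → W → ℝ) (hf_meas : Measurable (Function.uncurry f))
    (hf_nonneg : ∀ d w, 0 ≤ f d w)
    (hf_density : ∀ w, ∫ d, f d w ∂μ = 1)
    (P Q : Measure W) [IsProbabilityMeasure P] [IsProbabilityMeasure Q]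
    (ξ : ℝ) (hξ : 0 ≤ ξ)
    (hbdd : ∀ d, BddAbove (Set.range fun w => f d w))
    (hinf_pos : ∀ d, 0 < ⨅ w, f d w)
    (hratio : ∀ d, (⨆ w, f d w) ≤ Real.exp (2 * ξ) * ⨅ w, f d w)
    (GP GQ : Measure D)
    (hGP : GP = μ.withDensity fun d => ENNReal.ofReal (∫ w, f d w ∂P))
    (hGQ : GQ = μ.withDensity fun d => ENNReal.ofReal (∫ w, f d w ∂Q)) :
    jsDiv GQ GP ≤ (1 / 4) * (Real.exp (2 * ξ) - 1) ^ 2 * tvDist P Q ^ 2 := by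
  have h_ratio (d : D) (w w' : W) : f d w ≤ Real.exp (2 * ξ) * f d w' :=
    calc f d w ≤ ⨆ w, f d w := le_ciSup (hbdd d) w
      _ ≤ Real.exp (2 * ξ) * ⨅ w, f d w := hratio d
      _ ≤ Real.exp (2 * ξ) * f d w' := by
        gcongr
        exact ciInf_le ⟨0, Set.forall_mem_range.2 (hf_nonneg d)⟩ w'
  rw [hGP, hGQ]
  exact jsDiv_le_tvDist_sq_general μ f hf_meas hf_nonneg hf_density P Q _ (.of_forall h_ratio)
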